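/- arXiv:1412.2230 — 3 statements merged into one kernel-verified Lean document; each statement's English description precedes it below -/
import Mathlib

section
/- For each fixed k ∈ ℕ there is a constant C = C(k) ≥ 1 such that for all integers N ≥ 2 and all t ∈ [0,1): (1/C) · (t^N/(1−t)) (N + 1/(1−t))^k ≤ M_{∞,k}(t) − M_{N,k}(t) ≤ C · (t^N/(1−t)) (N + 1/(1−t))^k, where M_{N,k}(t) = Σ_{ν=1}^{N−1} ν^k t^ν and M_{∞,k}(t) = Σ_{ν=1}^{∞} ν^k t^ν; equivalently, Σ_{ν=N}^{∞} ν^k t^ν is comparable, uniformly in N and t, to (t^N/(1−t))(N + 1/(1−t))^k. -/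
/-- `M_{N,k}(t) = Σ_{ν=1}^{N−1} ν^k t^ν`. -/
noncomputable def Mfin (N k : ℕ) (t : ℝ) : ℝ :=
  ∑ ν ∈ Finset.Ico 1 N, (ν : ℝ) ^ k * t ^ ν

/-- `M_{∞,k}(t) = Σ_{ν=1}^∞ ν^k t^ν`. -/
noncomputable def Minf (k : ℕ) (t : ℝ) : ℝ :=
  ∑' ν : ℕ, ((ν + 1 : ℕ) : ℝ) ^ k * t ^ (ν + 1)

lemma aux_split (k N : ℕ) (hN : 2 ≤ N) (t : ℝ) (h0 : 0 ≤ t) (h1 : t < 1) :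
    HasSum (fun j : ℕ => t ^ N * (((N : ℝ) + j) ^ k * t ^ j)) (Minf k t - Mfin N k t) := by
  have hn : ‖t‖ < 1 := by rwa [Real.norm_of_nonneg h0]
  have hs : Summable (fun n : ℕ => (n : ℝ) ^ k * t ^ n) :=
    summable_pow_mul_geometric_of_norm_lt_one k hn
  have e1 := hs.sum_add_tsum_nat_add 1
  have e2 := hs.sum_add_tsum_nat_add N
  have e3 : ∑ i ∈ Finset.range N, (i : ℝ) ^ k * t ^ i
      = ∑ i ∈ Finset.range 1, (i : ℝ) ^ k * t ^ i + Mfin N k t := by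
    unfold Mfin
    rw [Finset.sum_range_add_sum_Ico _ (by omega)]
  have e4 : Minf k t - Mfin N k t = ∑' i : ℕ, ((i + N : ℕ) : ℝ) ^ k * t ^ (i + N) := by
    have : Minf k t = ∑' i : ℕ, ((i + 1 : ℕ) : ℝ) ^ k * t ^ (i + 1) := rfl
    rw [this]
    linarith
  have h := ((summable_nat_add_iff N).2 hs).hasSum
  rw [e4]
  have e5 : (fun j : ℕ => t ^ N * (((N : ℝ) + j) ^ k * t ^ j))
      = fun i : ℕ => ((i + N : ℕ) : ℝ) ^ k * t ^ (i + N) := by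
    funext j
    rw [pow_add, Nat.cast_add, add_comm (N : ℝ)]
    ring
  rw [e5]
  exact h

lemma aux_pow (a b : ℝ) (ha : 0 ≤ a) (hb : 0 ≤ b) (k : ℕ) :
    (a + b) ^ k ≤ 2 ^ k * (a ^ k + b ^ k) := by
  refine (add_pow_le ha hb k).trans ?_
  gcongr
  · norm_num
  · omega

lemma aux_desc_lower (j k : ℕ) : (j : ℝ) ^ k ≤ k.factorial * ((j + k).choose k : ℝ) := by
  have h := Nat.pow_sub_le_descFactorial (j + k) k
  rw [Nat.descFactorial_eq_factorial_mul_choose] at h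
  have h2 : j ^ k ≤ k.factorial * (j + k).choose k :=
    (Nat.pow_le_pow_left (by omega) k).trans h
  exact_mod_cast h2

lemma aux_desc_upper (j k N : ℕ) (hN : 2 ≤ N) :
    ((j + k).choose k : ℝ) ≤ ((k : ℝ) + 1) ^ k * ((N : ℝ) + j) ^ k := by
  have h := Nat.choose_le_descFactorial (j + k) k
  have h' := Nat.descFactorial_le_pow (j + k) k
  have h2 : (j + k) ^ k ≤ ((k + 1) * (N + j)) ^ k := by
    apply Nat.pow_le_pow_left
    nlinarith [Nat.zero_le (k * j), Nat.zero_le k, Nat.mul_le_mul_left k hN]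
  rw [mul_pow] at h2
  exact_mod_cast h.trans (h'.trans h2)

/-- For each `k` there is `C = C(k) ≥ 1` such that for all `N ≥ 2` and `t ∈ [0,1)`,
the tail `M_{∞,k}(t) − M_{N,k}(t) = Σ_{ν=N}^∞ ν^k t^ν` is comparable, uniformly in
`N` and `t`, to `(t^N/(1−t)) (N + 1/(1−t))^k`. -/
theorem Minf_sub_Mfin_asymp (k : ℕ) :
    ∃ C ≥ (1:ℝ), ∀ N : ℕ, 2 ≤ N → ∀ t : ℝ, 0 ≤ t → t < 1 →
      (1 / C) * ((t ^ N / (1 - t)) * ((N : ℝ) + 1 / (1 - t)) ^ k)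
          ≤ Minf k t - Mfin N k t ∧
      Minf k t - Mfin N k t
          ≤ C * ((t ^ N / (1 - t)) * ((N : ℝ) + 1 / (1 - t)) ^ k) := by
  refine ⟨2 ^ k * (1 + k.factorial + ((k : ℝ) + 1) ^ k), ?_, ?_⟩
  · have h1 : (1 : ℝ) ≤ 2 ^ k := one_le_pow₀ (by norm_num)
    have h2 : (0 : ℝ) ≤ k.factorial := by positivity
    have h3 : (0 : ℝ) ≤ ((k : ℝ) + 1) ^ k := by positivity
    nlinarith
  intro N hN t h0 h1
  have hn : ‖t‖ < 1 := by rwa [Real.norm_of_nonneg h0]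
  have hT := aux_split k N hN t h0 h1
  set T := Minf k t - Mfin N k t
  have hG := hasSum_geometric_of_lt_one h0 h1
  have hD := hasSum_choose_mul_geometric_of_norm_lt_one k hn
  have hpos : 0 < 1 - t := by linarith
  rw [div_eq_mul_inv (t ^ N), one_div (1 - t)]
  rw [one_div, ← inv_pow] at hD
  set s := (1 - t)⁻¹
  have hs : 0 < s := inv_pos.2 hpos
  have hF : (0 : ℝ) ≤ k.factorial := by positivity
  have hK : (0 : ℝ) ≤ ((k : ℝ) + 1) ^ k := by positivity
  have hNk : (N : ℝ) ^ k ≤ (N + s) ^ k := by gcongr; linarith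
  have hsk : s ^ k ≤ (N + s) ^ k := by gcongr; linarith [Nat.cast_nonneg (α := ℝ) N]
  have htN : 0 ≤ t ^ N := by positivity
  constructor
  · have a1 : t ^ N * ((N : ℝ) ^ k * s) ≤ T := by
      refine hasSum_le (fun j => ?_) ((hG.mul_left ((N : ℝ) ^ k)).mul_left (t ^ N)) hT
      gcongr
      linarith [Nat.cast_nonneg (α := ℝ) j]
    have a2 : t ^ N * s ^ (k + 1) ≤ ((k : ℝ) + 1) ^ k * T := by
      refine hasSum_le (fun j => ?_) (hD.mul_left (t ^ N)) (hT.mul_left (((k : ℝ) + 1) ^ k))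
      have := aux_desc_upper j k N hN
      calc t ^ N * (((j + k).choose k : ℝ) * t ^ j)
          ≤ t ^ N * ((((k : ℝ) + 1) ^ k * ((N : ℝ) + j) ^ k) * t ^ j) := by gcongr
        _ = _ := by ring
    have hT0 : 0 ≤ T := le_trans (by positivity) a1
    rw [one_div, inv_mul_le_iff₀ (by positivity)]
    calc t ^ N * s * ((N : ℝ) + s) ^ k
        ≤ t ^ N * s * (2 ^ k * ((N : ℝ) ^ k + s ^ k)) := by
          gcongr
          exact aux_pow _ _ (by positivity) hs.le k
      _ = 2 ^ k * (t ^ N * ((N : ℝ) ^ k * s) + t ^ N * s ^ (k + 1)) := by ring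
      _ ≤ 2 ^ k * (T + ((k : ℝ) + 1) ^ k * T) := by gcongr
      _ ≤ 2 ^ k * (T + ((k : ℝ) + 1) ^ k * T + k.factorial * T) := by
          refine mul_le_mul_of_nonneg_left ?_ (by positivity)
          exact le_add_of_nonneg_right (by positivity)
      _ = _ := by ring
  · have b : T ≤ t ^ N * (2 ^ k * ((N : ℝ) ^ k * s + k.factorial * s ^ (k + 1))) := by
      refine hasSum_le (fun j => ?_) hT
        ((((hG.mul_left ((N : ℝ) ^ k)).add
          (hD.mul_left (k.factorial : ℝ))).mul_left (2 ^ k)).mul_left (t ^ N))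
      have h2 := aux_pow N j (by positivity) (by positivity) k
      have h3 := aux_desc_lower j k
      calc t ^ N * (((N : ℝ) + j) ^ k * t ^ j)
          ≤ t ^ N * ((2 ^ k * ((N : ℝ) ^ k + k.factorial * ((j + k).choose k : ℝ))) * t ^ j) := by
            gcongr
            exact h2.trans (by gcongr)
        _ = _ := by ring
    calc T ≤ _ := b
      _ = t ^ N * s * 2 ^ k * ((N : ℝ) ^ k + k.factorial * s ^ k) := by ring
      _ ≤ t ^ N * s * 2 ^ k * ((N + s) ^ k + k.factorial * (N + s) ^ k) := by gcongr
      _ ≤ t ^ N * s * 2 ^ k * ((N + s) ^ k + k.factorial * (N + s) ^ k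
            + ((k : ℝ) + 1) ^ k * (N + s) ^ k) := by
          refine mul_le_mul_of_nonneg_left ?_ (by positivity)
          exact le_add_of_nonneg_right (by positivity)
      _ = _ := by ring
end

section
/- For each fixed k ∈ ℕ there is a constant C = C(k) ≥ 1 such that for all integers N ≥ 2 and all t ∈ [0,1): (1/C) · t · min(1/(1−t), N)^{k+1} ≤ M_{N,k}(t) ≤ C · t · min(1/(1−t), N)^{k+1}, where M_{N,k}(t) = Σ_{ν=1}^{N−1} ν^k t^ν. -/
theorem Mfin_upper_N (N k : ℕ) (t : ℝ) (h0 : 0 ≤ t) (h1 : t < 1) :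
    Mfin N k t ≤ t * (N : ℝ) ^ (k + 1) := by
  unfold Mfin
  have h : ∀ ν ∈ Finset.Ico 1 N, (ν : ℝ) ^ k * t ^ ν ≤ (N : ℝ) ^ k * t := by
    intro ν hν
    rw [Finset.mem_Ico] at hν
    have a : (ν : ℝ) ≤ N := by exact_mod_cast hν.2.le
    have b : t ^ ν ≤ t := pow_le_of_le_one h0 h1.le (by omega)
    gcongr
  refine (Finset.sum_le_card_nsmul _ _ _ h).trans ?_
  rw [Nat.card_Ico, nsmul_eq_mul]
  have c : ((N - 1 : ℕ) : ℝ) ≤ N := by exact_mod_cast Nat.sub_le _ _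
  calc ((N - 1 : ℕ) : ℝ) * ((N : ℝ) ^ k * t) ≤ N * ((N : ℝ) ^ k * t) := by gcongr
    _ = _ := by ring

theorem Mfin_upper_t (N k : ℕ) (t : ℝ) (h0 : 0 ≤ t) (h1 : t < 1) :
    Mfin N k t ≤ (k.factorial : ℝ) * (t * (1 / (1 - t)) ^ (k + 1)) := by
  unfold Mfin
  have hn : ‖t‖ < 1 := by rwa [Real.norm_of_nonneg h0]
  have hs := summable_choose_mul_geometric_of_norm_lt_one k hn
  have ht := tsum_choose_mul_geometric_of_norm_lt_one k hn
  rw [Finset.sum_Ico_eq_sum_range]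
  have h : ∀ n ∈ Finset.range (N - 1), ((1 + n : ℕ) : ℝ) ^ k * t ^ (1 + n) ≤
      (k.factorial : ℝ) * t * (((n + k).choose k : ℝ) * t ^ n) := by
    intro n _
    have a : (n + 1) ^ k ≤ k.factorial * (n + k).choose k := by
      rw [← Nat.ascFactorial_eq_factorial_mul_choose]
      exact Nat.pow_succ_le_ascFactorial (n + 1) k
    have a' : ((1 + n : ℕ) : ℝ) ^ k ≤ k.factorial * ((n + k).choose k : ℝ) := by
      rw [add_comm 1 n]
      exact_mod_cast a
    calc _ ≤ (k.factorial * ((n + k).choose k : ℝ)) * t ^ (1 + n) := by gcongr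
      _ = _ := by ring
  refine (Finset.sum_le_sum h).trans ?_
  rw [← Finset.mul_sum, ← mul_assoc, one_div_pow, ← ht]
  gcongr
  exact hs.sum_le_tsum _ (fun i _ => by positivity)

theorem Mfin_lower (N k : ℕ) (hN : 2 ≤ N) (t m : ℝ) (h0 : 0 ≤ t) (h1 : t < 1)
    (hm0 : 0 ≤ m) (hmN : m ≤ N) (hmt : m * (1 - t) ≤ 1) :
    t * m ^ (k + 1) ≤ 2 * 8 ^ (k + 1) * Mfin N k t := by
  unfold Mfin
  rcases le_or_gt m 4 with h | h
  · have a : t ≤ ∑ ν ∈ Finset.Ico 1 N, (ν : ℝ) ^ k * t ^ ν := by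
      have := Finset.single_le_sum (f := fun ν : ℕ => (ν : ℝ) ^ k * t ^ ν)
        (s := Finset.Ico 1 N) (fun i _ => by positivity) (Finset.mem_Ico.2 ⟨le_refl 1, hN⟩)
      simpa using this
    have b : m ^ (k + 1) ≤ 8 ^ (k + 1) := by gcongr; linarith
    calc t * m ^ (k + 1) ≤ t * 8 ^ (k + 1) := by gcongr
      _ ≤ 2 * 8 ^ (k + 1) * t := by nlinarith [mul_nonneg h0 (pow_nonneg (by norm_num : (0:ℝ) ≤ 8) (k+1))]
      _ ≤ _ := by gcongr
  · set J := ⌊m / 4⌋₊ with hJ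
    have j1 : 1 ≤ J := Nat.le_floor (by push_cast; linarith)
    have j2 : (J : ℝ) ≤ m / 4 := Nat.floor_le (by linarith)
    have j3 : m / 4 < J + 1 := Nat.lt_floor_add_one _
    have j1' : (1 : ℝ) ≤ J := by exact_mod_cast j1
    have j4 : m ≤ 8 * J := by linarith
    have j5 : 2 * J ≤ N := by
      have : (2 * J : ℝ) ≤ N := by linarith
      exact_mod_cast this
    have hsub : Finset.Ico J (2 * J) ⊆ Finset.Ico 1 N := Finset.Ico_subset_Ico j1 j5
    have hle := Finset.sum_le_sum_of_subset_of_nonneg (f := fun ν : ℕ => (ν : ℝ) ^ k * t ^ ν)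
      hsub (fun i _ _ => by positivity)
    have hterm : ∀ ν ∈ Finset.Ico J (2 * J), (J : ℝ) ^ k * (t * (1 / 2)) ≤ (ν : ℝ) ^ k * t ^ ν := by
      intro ν hν
      rw [Finset.mem_Ico] at hν
      obtain ⟨n, rfl⟩ : ∃ n, ν = n + 1 := ⟨ν - 1, by omega⟩
      have a : (J : ℝ) ≤ ((n + 1 : ℕ) : ℝ) := by exact_mod_cast hν.1
      have b : (n : ℝ) ≤ 2 * J := by
        have : n ≤ 2 * J := by omega
        exact_mod_cast this
      have c : 1 / 2 ≤ t ^ n := by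
        have := one_add_mul_le_pow (a := t - 1) (by linarith) n
        have e : (n : ℝ) * (1 - t) ≤ m / 2 * (1 - t) := by
          apply mul_le_mul_of_nonneg_right <;> linarith
        rw [add_sub_cancel] at this
        linarith
      rw [pow_succ' t]
      gcongr
    have hc := Finset.card_nsmul_le_sum _ _ _ hterm
    rw [Nat.card_Ico, nsmul_eq_mul, show 2 * J - J = J by omega] at hc
    calc t * m ^ (k + 1) ≤ t * (8 * J) ^ (k + 1) := by gcongr
      _ = 2 * 8 ^ (k + 1) * (J * ((J : ℝ) ^ k * (t * (1 / 2)))) := by rw [mul_pow]; ring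
      _ ≤ _ := by gcongr; exact hc.trans hle

/-- For each `k` there is `C = C(k) ≥ 1` such that for all `N ≥ 2` and `t ∈ [0,1)`,
`M_{N,k}(t)` is comparable to `t · min(1/(1−t), N)^{k+1}` with constant `C`. -/
theorem Mfin_asymp (k : ℕ) :
    ∃ C ≥ (1:ℝ), ∀ N : ℕ, 2 ≤ N → ∀ t : ℝ, 0 ≤ t → t < 1 →
      (1 / C) * (t * min (1 / (1 - t)) (N : ℝ) ^ (k + 1)) ≤ Mfin N k t ∧
      Mfin N k t ≤ C * (t * min (1 / (1 - t)) (N : ℝ) ^ (k + 1)) := by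
  have hf : (1 : ℝ) ≤ k.factorial := by exact_mod_cast Nat.factorial_pos k
  have h8 : (0 : ℝ) < 2 * 8 ^ (k + 1) := by positivity
  refine ⟨k.factorial + 2 * 8 ^ (k + 1), by linarith, ?_⟩
  intro N hN t h0 h1
  have hp : 0 < 1 - t := by linarith
  have hm0 : 0 ≤ min (1 / (1 - t)) (N : ℝ) := le_min (by positivity) (by positivity)
  have hM : 0 ≤ Mfin N k t := Finset.sum_nonneg (fun i _ => by positivity)
  constructor
  · have := Mfin_lower N k hN t _ h0 h1 hm0 (min_le_right _ _)
      ((le_div_iff₀ hp).1 (min_le_left _ _))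
    rw [one_div, inv_mul_le_iff₀ (by linarith)]
    refine this.trans ?_
    gcongr
    linarith
  · have hx : 0 ≤ t * min (1 / (1 - t)) (N : ℝ) ^ (k + 1) := by positivity
    have key : Mfin N k t ≤ k.factorial * (t * min (1 / (1 - t)) (N : ℝ) ^ (k + 1)) := by
      rcases min_choice (1 / (1 - t)) (N : ℝ) with h | h
      · rw [h]
        exact Mfin_upper_t N k t h0 h1
      · rw [h] at hx ⊢
        exact (Mfin_upper_N N k t h0 h1).trans (le_mul_of_one_le_left hx hf)
    refine key.trans ?_
    gcongr
    linarith
end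

section
/- There is a universal constant C ≥ 1 such that for all integers N ≥ 2 and all t with 0 < t ≤ 1 − 1/N, with K(t) = K_N(t) = Σ_{ν=0}^{N−1} t^ν: (1/C) K(t)⁴ ≤ (2/t) ( K(t)·((tD)²K)(t) − ((tD)K)(t)² ) ≤ C K(t)⁴, where (tD)K(t) = Σ_{ν=0}^{N−1} ν t^ν and (tD)²K(t) = Σ_{ν=0}^{N−1} ν² t^ν. -/
open Finset

/-- The variance-like quantity. -/
noncomputable def VV (t : ℝ) (N : ℕ) : ℝ :=
  (∑ ν ∈ range N, t ^ ν) * (∑ ν ∈ range N, (ν : ℝ) ^ 2 * t ^ ν)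
              - (∑ ν ∈ range N, (ν : ℝ) * t ^ ν) ^ 2

lemma VV_succ (t : ℝ) (n : ℕ) :
    VV t (n + 1) = VV t n + t ^ n * ∑ ν ∈ range n, ((n : ℝ) - ν) ^ 2 * t ^ ν := by
  have h : ∑ ν ∈ range n, ((n : ℝ) - ν) ^ 2 * t ^ ν
      = (n : ℝ) ^ 2 * (∑ ν ∈ range n, t ^ ν) - 2 * n * (∑ ν ∈ range n, (ν : ℝ) * t ^ ν)
        + ∑ ν ∈ range n, (ν : ℝ) ^ 2 * t ^ ν := by
    rw [mul_sum, mul_sum, ← sum_sub_distrib, ← sum_add_distrib]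
    refine sum_congr rfl fun x _ => ?_
    ring
  rw [h]
  unfold VV
  simp only [sum_range_succ]
  ring

lemma VV_mono {t : ℝ} (ht : 0 ≤ t) : Monotone (VV t) := by
  refine monotone_nat_of_le_succ fun n => ?_
  rw [VV_succ]
  have : 0 ≤ t ^ n * ∑ ν ∈ range n, ((n : ℝ) - ν) ^ 2 * t ^ ν :=
    mul_nonneg (by positivity) (sum_nonneg fun i _ => by positivity)
  linarith

lemma sum_sq_aux (n : ℕ) (x : ℝ) : ∑ ν ∈ range n, (x - ν) ^ 2
    = n * x ^ 2 - x * n * (n - 1) + n * (n - 1) * (2 * n - 1) / 6 := by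
  induction n with
  | zero => simp
  | succ k ih => rw [sum_range_succ, ih]; push_cast; ring

lemma VV_lower {t : ℝ} (ht : 0 ≤ t) (M : ℕ) (h : ∀ k ≤ 2 * M, (1 / 2 : ℝ) ≤ t ^ k) :
    ∀ m ≤ M, (m : ℝ) ^ 2 * ((m : ℝ) ^ 2 - 1) / 24 ≤ VV t m := by
  intro m
  induction m with
  | zero => intro _; simp [VV]
  | succ n ih =>
    intro hm
    have h1 := ih (by omega)
    rw [VV_succ]
    have h2 : (1 / 2) * ∑ ν ∈ range n, ((n : ℝ) - ν) ^ 2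
        ≤ t ^ n * ∑ ν ∈ range n, ((n : ℝ) - ν) ^ 2 * t ^ ν := by
      rw [mul_sum, mul_sum]
      refine sum_le_sum fun i hi => ?_
      have hi' := mem_range.1 hi
      have h3 := h (n + i) (by omega)
      rw [pow_add] at h3
      have := mul_le_mul_of_nonneg_right h3 (sq_nonneg ((n : ℝ) - i))
      linarith
    rw [sum_sq_aux] at h2
    push_cast
    linarith

lemma S0_closed (t : ℝ) (N : ℕ) : (1 - t) * (∑ ν ∈ range N, t ^ ν) = 1 - t ^ N := by
  induction N with
  | zero => simp
  | succ k ih => rw [sum_range_succ, mul_add, ih]; ring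

lemma S1_closed (t : ℝ) (N : ℕ) : (1 - t) ^ 2 * (∑ ν ∈ range N, (ν : ℝ) * t ^ ν)
    = t * (1 - t ^ N) - N * t ^ N * (1 - t) := by
  induction N with
  | zero => simp
  | succ k ih => rw [sum_range_succ, mul_add, ih]; push_cast; ring

lemma S2_closed (t : ℝ) (N : ℕ) : (1 - t) ^ 3 * (∑ ν ∈ range N, (ν : ℝ) ^ 2 * t ^ ν)
    = (t + t ^ 2) * (1 - t ^ N) - 2 * N * t ^ N * t * (1 - t) - N ^ 2 * t ^ N * (1 - t) ^ 2 := by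
  induction N with
  | zero => simp
  | succ k ih => rw [sum_range_succ, mul_add, ih]; push_cast; ring

lemma VV_closed (t : ℝ) (N : ℕ) : (1 - t) ^ 4 * VV t N
    = t * (1 - t ^ N) ^ 2 - N ^ 2 * t ^ N * (1 - t) ^ 2 := by
  have : (1 - t) ^ 4 * VV t N = ((1 - t) * (∑ ν ∈ range N, t ^ ν)) *
      ((1 - t) ^ 3 * (∑ ν ∈ range N, (ν : ℝ) ^ 2 * t ^ ν))
      - ((1 - t) ^ 2 * (∑ ν ∈ range N, (ν : ℝ) * t ^ ν)) ^ 2 := by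
    unfold VV; ring
  rw [this, S0_closed, S1_closed, S2_closed]
  ring

lemma VV_two (t : ℝ) : VV t 2 = t := by
  simp [VV, sum_range_succ]; ring

lemma pow_le_half {N : ℕ} (hN : 2 ≤ N) {t : ℝ} (ht : 0 < t) (h : t ≤ 1 - 1 / (N : ℝ)) :
    t ^ N ≤ 1 / 2 := by
  have hN0 : (0 : ℝ) < N := by positivity
  have h1 : t ≤ Real.exp (-(1 / (N : ℝ))) := by
    have := Real.add_one_le_exp (-(1 / (N : ℝ)))
    linarith
  have h2 : t ^ N ≤ Real.exp (-1) := by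
    calc t ^ N ≤ Real.exp (-(1 / (N : ℝ))) ^ N := by gcongr
      _ = Real.exp (-1) := by
        rw [← Real.exp_nat_mul]; congr 1; field_simp
  have h3 := Real.exp_one_gt_d9
  have h4 : Real.exp (-1) ≤ 1 / 2 := by
    rw [Real.exp_neg, inv_eq_one_div]
    exact one_div_le_one_div_of_le (by norm_num) (by linarith)
  linarith

lemma VV_main_lower {N : ℕ} (hN : 2 ≤ N) {t : ℝ} (ht : 0 < t) (h : t ≤ 1 - 1 / (N : ℝ)) :
    t ≤ 41472 * ((1 - t) ^ 4 * VV t N) := by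
  have hN0 : (0 : ℝ) < N := by positivity
  have hd : 1 / (N : ℝ) ≤ 1 - t := by linarith
  have hd0 : 0 < 1 - t := lt_of_lt_of_le (by positivity) hd
  by_cases hc : t ≤ 7 / 8
  · have h1 : t ≤ VV t N := by
      have := VV_mono ht.le hN
      rwa [VV_two] at this
    have h2 : (1 / 8 : ℝ) ^ 4 ≤ (1 - t) ^ 4 := by gcongr; linarith
    have h3 : (1 / 8 : ℝ) ^ 4 * t ≤ (1 - t) ^ 4 * VV t N := by gcongr
    norm_num at h3
    linarith
  · push Not at hc
    set M := ⌊1 / (4 * (1 - t))⌋₊ with hM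
    have hx : 2 ≤ 1 / (4 * (1 - t)) := by
      rw [le_div_iff₀ (by positivity)]; linarith
    have hM2 : 2 ≤ M := Nat.le_floor (by exact_mod_cast hx)
    have hM2' : (2 : ℝ) ≤ M := by exact_mod_cast hM2
    have hMle : (M : ℝ) ≤ 1 / (4 * (1 - t)) := Nat.floor_le (by positivity)
    have hMlt : 1 / (4 * (1 - t)) < M + 1 := Nat.lt_floor_add_one _
    rw [le_div_iff₀ (by positivity)] at hMle
    rw [div_lt_iff₀ (by positivity)] at hMlt
    have hNd : 1 ≤ (1 - t) * N := by rwa [div_le_iff₀ hN0] at hd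
    have hMN : M ≤ N := by
      have : (M : ℝ) ≤ N := by
        by_contra hcon
        push Not at hcon
        nlinarith
      exact_mod_cast this
    have hk : ∀ k ≤ 2 * M, (1 / 2 : ℝ) ≤ t ^ k := by
      intro k hk
      have hb := one_add_mul_le_pow (a := t - 1) (by linarith) k
      have hk' : (k : ℝ) ≤ 2 * M := by exact_mod_cast hk
      have e : 1 + (t - 1) = t := by ring
      rw [e] at hb
      nlinarith
    have h1 := VV_lower ht.le M hk M le_rfl
    have h2 := VV_mono ht.le hMN
    have h3 : (M : ℝ) ^ 4 / 32 ≤ VV t N := by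
      have h7 : 0 ≤ (M : ℝ) ^ 2 - 4 := by nlinarith
      have h8 := mul_nonneg (sq_nonneg (M : ℝ)) h7
      linarith
    have h4 : 1 / 6 ≤ (1 - t) * M := by nlinarith
    have h5 : (1 / 6 : ℝ) ^ 4 ≤ ((1 - t) * M) ^ 4 := by gcongr
    have h6 : (1 - t) ^ 4 * ((M : ℝ) ^ 4 / 32) ≤ (1 - t) ^ 4 * VV t N := by gcongr
    rw [mul_pow] at h5
    norm_num at h5
    linarith

/-- There is a universal `C ≥ 1` such that for all `N ≥ 2` and `0 < t ≤ 1 − 1/N`,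
with `K(t) = Σ_{ν=0}^{N−1} t^ν`:
`(1/C) K⁴ ≤ (2/t)(K·(tD)²K − ((tD)K)²) ≤ C K⁴`. -/
theorem K_tD_comparison :
    ∃ C ≥ (1:ℝ), ∀ N : ℕ, 2 ≤ N → ∀ t : ℝ, 0 < t → t ≤ 1 - 1 / (N : ℝ) →
      (1 / C) * (∑ ν ∈ range N, t ^ ν) ^ 4
          ≤ (2 / t) * ((∑ ν ∈ range N, t ^ ν) * (∑ ν ∈ range N, (ν : ℝ) ^ 2 * t ^ ν)
              - (∑ ν ∈ range N, (ν : ℝ) * t ^ ν) ^ 2) ∧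
      (2 / t) * ((∑ ν ∈ range N, t ^ ν) * (∑ ν ∈ range N, (ν : ℝ) ^ 2 * t ^ ν)
              - (∑ ν ∈ range N, (ν : ℝ) * t ^ ν) ^ 2)
          ≤ C * (∑ ν ∈ range N, t ^ ν) ^ 4 := by
  refine ⟨41472, by norm_num, fun N hN t ht h => ?_⟩
  have hN0 : (0 : ℝ) < N := by positivity
  have hd0 : 0 < 1 - t := by
    have : 0 < 1 / (N : ℝ) := by positivity
    linarith
  have hlow := VV_main_lower hN ht h
  have hcl := VV_closed t N
  have hhalf := pow_le_half hN ht h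
  have hp : 0 < t ^ N := by positivity
  have hK := S0_closed t N
  change (1 / 41472) * (∑ ν ∈ range N, t ^ ν) ^ 4 ≤ (2 / t) * VV t N ∧
    (2 / t) * VV t N ≤ 41472 * (∑ ν ∈ range N, t ^ ν) ^ 4
  generalize (∑ ν ∈ range N, t ^ ν) = K at hK ⊢
  have hK4 : (1 - t) ^ 4 * K ^ 4 = (1 - t ^ N) ^ 4 := by rw [← mul_pow, hK]
  have hle : (1 - t ^ N) ^ 4 ≤ 1 := pow_le_one₀ (by linarith) (by linarith)
  have hge : (1 / 2 : ℝ) ^ 4 ≤ (1 - t ^ N) ^ 4 := by gcongr; linarith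
  have hd4 : 0 < (1 - t) ^ 4 := by positivity
  have hup : (1 - t) ^ 4 * VV t N ≤ t := by
    rw [hcl]
    have h1 : (1 - t ^ N) ^ 2 ≤ 1 := pow_le_one₀ (by linarith) (by linarith)
    have h2 : 0 ≤ (N : ℝ) ^ 2 * t ^ N * (1 - t) ^ 2 := by positivity
    nlinarith
  have e : (2 / t) * VV t N = 2 * VV t N / t := by ring
  rw [e, le_div_iff₀ ht, div_le_iff₀ ht]
  constructor
  · refine le_of_mul_le_mul_left ?_ hd4
    have : t * ((1 - t) ^ 4 * K ^ 4) ≤ t * 1 := by rw [hK4]; gcongr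
    linarith
  · refine le_of_mul_le_mul_left ?_ hd4
    have : t * (1 / 2 : ℝ) ^ 4 ≤ t * ((1 - t) ^ 4 * K ^ 4) := by rw [hK4]; gcongr
    norm_num at this
    linarith
end
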